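/- Suppose G ∈ C_1 ⊕ C_2 where C_1 and C_2 are vertex-disjoint alternating cycles of lengths 2n and 2m regarded as 2-edge-colored graphs, and G has no good pair. Then for every exterior edge uv of G: (i) uv ∈ P_{uv}; (ii) |P_{uv}| = lcm(2n,2m) = 2·lcm(n,m); and (iii) P_{uv} contains exactly lcm(n,m) red edges and exactly lcm(n,m) blue edges. -/

import Mathlib

/-- An alternating cycle of length `N` in the 2-edge-colored graph `(G, c)`
(colors: `true` = red, `false` = blue). -/
def IsAltCycle {V : Type*} (G : SimpleGraph V) (c : Sym2 V → Bool) {N : ℕ}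
    (x : ZMod N → V) : Prop :=
  Function.Injective x ∧ (∀ i, G.Adj (x i) (x (i + 1))) ∧
    ∀ i, c s(x i, x (i + 1)) ≠ c s(x (i + 1), x (i + 2))

/-- There is a good pair of edges between the two vertex-disjoint alternating
cycles `x` and `y`. -/
def HasGoodPair {V : Type*} (G : SimpleGraph V) (c : Sym2 V → Bool) {N M : ℕ}
    (x : ZMod N → V) (y : ZMod M → V) : Prop :=
  ∃ (s s' : ZMod N) (t t' : ZMod M),
    (s' = s - 1 ∨ s' = s + 1) ∧ (t' = t - 1 ∨ t' = t + 1) ∧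
    G.Adj (x s) (y t) ∧ G.Adj (x s') (y t') ∧
    c s(x s, x s') = c s(x s, y t) ∧
    c s(x s', y t') = c s(x s, y t) ∧
    c s(y t', y t) = c s(x s, y t)

/-- `G` is a colored generalized sum of the two vertex-disjoint alternating cycles
`C₁ = x` (of length `2n`) and `C₂ = y` (of length `2m`), regarded as 2-edge-colored
graphs: the `x`- and `y`-vertices cover `V(G)` and have disjoint ranges, the edges of
`G` inside each part are exactly the corresponding cycle edges, both cycles are
alternating, and between any two vertices of different parts there is exactly one
(arbitrarily colored) edge. -/
def IsCGSTwoCycles {V : Type*} (G : SimpleGraph V) (c : Sym2 V → Bool) {n m : ℕ}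
    (x : ZMod (2 * n) → V) (y : ZMod (2 * m) → V) : Prop :=
  IsAltCycle G c x ∧ IsAltCycle G c y ∧
  Disjoint (Set.range x) (Set.range y) ∧
  (∀ v : V, v ∈ Set.range x ∪ Set.range y) ∧
  (∀ i j : ZMod (2 * n), G.Adj (x i) (x j) ↔ (j = i + 1 ∨ j = i - 1)) ∧
  (∀ i j : ZMod (2 * m), G.Adj (y i) (y j) ↔ (j = i + 1 ∨ j = i - 1)) ∧
  (∀ (i : ZMod (2 * n)) (j : ZMod (2 * m)), G.Adj (x i) (y j))

/-- The set of exterior edges of a colored generalized sum of the two cycles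
`x` and `y`: the edges joining the two parts. -/
def extEdges {V : Type*} {N M : ℕ} (x : ZMod N → V) (y : ZMod M → V) : Set (Sym2 V) :=
  {e | ∃ i j, e = s(x i, y j)}

/-- One step of the construction of a parallel class: from the exterior edge
`x a - y b`, move to the neighbor of `x a` on `C₁` and the neighbor of `y b` on `C₂`
joined to them by the cycle-edge whose color equals `c s(x a, y b)`. -/
def pstep {V : Type*} (c : Sym2 V → Bool) {N M : ℕ} (x : ZMod N → V) (y : ZMod M → V) :
    ZMod N × ZMod M → ZMod N × ZMod M :=
  fun p =>
    (if c s(x p.1, x (p.1 + 1)) = c s(x p.1, y p.2) then p.1 + 1 else p.1 - 1,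
     if c s(y p.2, y (p.2 + 1)) = c s(x p.1, y p.2) then p.2 + 1 else p.2 - 1)

/-- The parallel class `P_{uv}` of the exterior edge `u v = x a - y b`:
the set of exterior edges obtained from it by iterating `pstep`,
`lcm (2n) (2m)` times. -/
def parallelClass {V : Type*} (c : Sym2 V → Bool) {N M : ℕ}
    (x : ZMod N → V) (y : ZMod M → V) (a : ZMod N) (b : ZMod M) : Set (Sym2 V) :=
  {e | ∃ i < Nat.lcm N M,
    e = s(x ((pstep c x y)^[i] (a, b)).1, y ((pstep c x y)^[i] (a, b)).2)}

/-- The number of red exterior edges incident with `v`. -/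
noncomputable def dred {V : Type*} (c : Sym2 V → Bool) {N M : ℕ}
    (x : ZMod N → V) (y : ZMod M → V) (v : V) : ℕ :=
  {e : Sym2 V | e ∈ extEdges x y ∧ v ∈ e ∧ c e = true}.ncard

/-- The number of blue exterior edges incident with `v`. -/
noncomputable def dblue {V : Type*} (c : Sym2 V → Bool) {N M : ℕ}
    (x : ZMod N → V) (y : ZMod M → V) (v : V) : ℕ :=
  {e : Sym2 V | e ∈ extEdges x y ∧ v ∈ e ∧ c e = false}.ncard

/-!
Since consecutive edges of an alternating cycle have different colors, walking along it with colors
`k, !k, k, …` means walking steadily in one direction. If two successive edges of a parallel class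
had the same color, then together with the two cycle edges used in the step they would form a
monochromatic 4-cycle, hence a good pair. So the colors along a parallel class alternate, and both
ends move steadily around their cycles: starting from the index pair `p`, the `i`-th edge has index
pair `p + i • d` with `d = (±1, ±1)`. The order of `d` in `ZMod N × ZMod M` is `lcm N M`, so the
first `lcm N M` edges are distinct.
-/

theorem count_not_iterate_eq (k l : Bool) (n : ℕ) :
    Nat.count (fun i => not^[i] k = l) (2 * n) = n := by
  induction n with
  | zero => rfl
  | succ n ih =>
    rw [Nat.mul_succ, Nat.count_succ, Nat.count_succ, ih, Function.iterate_succ_apply']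
    generalize not^[2 * n] k = k'
    cases k' <;> cases l <;> rfl

section Cycle

variable {V : Type*} {c : Sym2 V → Bool} {N : ℕ} {z : ZMod N → V}

/-- The coloring alternates along the closed walk `z`: the part of `IsAltCycle` that involves
neither the graph nor the injectivity of `z`. -/
def IsAlternating (c : Sym2 V → Bool) (z : ZMod N → V) : Prop :=
  ∀ i, c s(z i, z (i + 1)) ≠ c s(z (i + 1), z (i + 2))

/-- The direction `±1` in which the edge of color `k` leaves the vertex `z i` of an alternating
closed walk. -/
def colorDir (c : Sym2 V → Bool) (z : ZMod N → V) (k : Bool) (i : ZMod N) : ZMod N :=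
  if c s(z i, z (i + 1)) = k then 1 else -1

theorem add_colorDir (c : Sym2 V → Bool) (z : ZMod N → V) (k : Bool) (i : ZMod N) :
    i + colorDir c z k i = if c s(z i, z (i + 1)) = k then i + 1 else i - 1 := by
  unfold colorDir
  split_ifs
  · rfl
  · exact (sub_eq_add_neg i 1).symm

theorem add_colorDir_eq_or (c : Sym2 V → Bool) (z : ZMod N → V) (k : Bool) (i : ZMod N) :
    i + colorDir c z k i = i - 1 ∨ i + colorDir c z k i = i + 1 := by
  rw [add_colorDir]
  split_ifs
  · exact .inr rfl
  · exact .inl rfl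

theorem addOrderOf_colorDir (c : Sym2 V → Bool) (z : ZMod N → V) (k : Bool) (i : ZMod N) :
    addOrderOf (colorDir c z k i) = N := by
  unfold colorDir
  split_ifs
  · exact ZMod.addOrderOf_one N
  · rw [addOrderOf_neg, ZMod.addOrderOf_one]

theorem IsAlternating.color_succ (hz : IsAlternating c z) (i : ZMod N) :
    c s(z (i + 1), z (i + 1 + 1)) = !c s(z i, z (i + 1)) := by
  rw [add_assoc, one_add_one_eq_two, Bool.eq_not_iff]
  exact (hz i).symm

theorem IsAlternating.color_pred (hz : IsAlternating c z) (i : ZMod N) :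
    c s(z (i - 1), z i) = !c s(z i, z (i + 1)) := by
  have h := hz.color_succ (i - 1)
  rw [sub_add_cancel] at h
  rw [h, Bool.not_not]

theorem IsAlternating.color_add_colorDir (hz : IsAlternating c z) (k : Bool) (i : ZMod N) :
    c s(z i, z (i + colorDir c z k i)) = k := by
  rw [add_colorDir]
  split_ifs with h
  · exact h
  · rw [Sym2.eq_swap, hz.color_pred, Bool.eq_not_of_ne h, Bool.not_not]

theorem IsAlternating.colorDir_not_add_colorDir (hz : IsAlternating c z) (k : Bool) (i : ZMod N) :
    colorDir c z (!k) (i + colorDir c z k i) = colorDir c z k i := by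
  by_cases h : c s(z i, z (i + 1)) = k
  · simp [colorDir, h, hz.color_succ]
  · simp [colorDir, h, ← sub_eq_add_neg, hz.color_pred]

end Cycle

section ParallelClass

variable {V : Type*} {G : SimpleGraph V} {c : Sym2 V → Bool} {N M : ℕ}
  {x : ZMod N → V} {y : ZMod M → V}

/-- The exterior edge between the cycles `x` and `y` with the given pair of indices. -/
def extEdge (x : ZMod N → V) (y : ZMod M → V) (p : ZMod N × ZMod M) : Sym2 V :=
  s(x p.1, y p.2)

/-- The displacement, with entries `±1`, by which `pstep` moves an exterior edge. -/
def stepDir (c : Sym2 V → Bool) (x : ZMod N → V) (y : ZMod M → V) (p : ZMod N × ZMod M) :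
    ZMod N × ZMod M :=
  (colorDir c x (c (extEdge x y p)) p.1, colorDir c y (c (extEdge x y p)) p.2)

theorem extEdge_injective (hx : Function.Injective x) (hy : Function.Injective y)
    (hdisj : Disjoint (Set.range x) (Set.range y)) : Function.Injective (extEdge x y) := by
  intro p q h
  obtain ⟨h₁, h₂⟩ | ⟨h₁, -⟩ := Sym2.eq_iff.mp h
  · exact Prod.ext (hx h₁) (hy h₂)
  · exact (Set.disjoint_range_iff.mp hdisj p.1 q.2 h₁).elim

theorem pstep_eq_add_stepDir (c : Sym2 V → Bool) (x : ZMod N → V) (y : ZMod M → V)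
    (p : ZMod N × ZMod M) : pstep c x y p = p + stepDir c x y p :=
  Prod.ext (add_colorDir ..).symm (add_colorDir ..).symm

theorem addOrderOf_stepDir (c : Sym2 V → Bool) (x : ZMod N → V) (y : ZMod M → V)
    (p : ZMod N × ZMod M) : addOrderOf (stepDir c x y p) = N.lcm M := by
  rw [stepDir, Prod.addOrderOf_mk, addOrderOf_colorDir, addOrderOf_colorDir]

theorem stepDir_pstep (hx : IsAlternating c x) (hy : IsAlternating c y) {p : ZMod N × ZMod M}
    (hp : c (extEdge x y (pstep c x y p)) = !c (extEdge x y p)) :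
    stepDir c x y (pstep c x y p) = stepDir c x y p := by
  rw [stepDir, hp, pstep_eq_add_stepDir]
  exact Prod.ext (hx.colorDir_not_add_colorDir ..) (hy.colorDir_not_add_colorDir ..)

theorem semiconj_not_of_not_hasGoodPair (hx : IsAlternating c x) (hy : IsAlternating c y)
    (hadj : ∀ i j, G.Adj (x i) (y j)) (hgp : ¬ HasGoodPair G c x y) :
    Function.Semiconj (c ∘ extEdge x y) (pstep c x y) not := by
  intro p
  rw [Function.comp_apply, Function.comp_apply, Bool.eq_not_iff, pstep_eq_add_stepDir]
  intro hcolor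
  refine hgp ⟨p.1, (p + stepDir c x y p).1, p.2, (p + stepDir c x y p).2,
    add_colorDir_eq_or .., add_colorDir_eq_or .., hadj _ _, hadj _ _,
    hx.color_add_colorDir .., hcolor, ?_⟩
  rw [Sym2.eq_swap]
  exact hy.color_add_colorDir ..

theorem pstep_iterate (hx : IsAlternating c x) (hy : IsAlternating c y)
    (hflip : Function.Semiconj (c ∘ extEdge x y) (pstep c x y) not)
    (i : ℕ) (p : ZMod N × ZMod M) : (pstep c x y)^[i] p = p + i • stepDir c x y p := by
  induction i generalizing p with
  | zero => simp
  | succ i ih =>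
    calc (pstep c x y)^[i + 1] p
        = pstep c x y p + i • stepDir c x y (pstep c x y p) := ih _
      _ = p + (stepDir c x y p + i • stepDir c x y p) := by
        rw [stepDir_pstep hx hy (hflip p), pstep_eq_add_stepDir, add_assoc]
      _ = p + (i + 1) • stepDir c x y p := by rw [succ_nsmul']

theorem injOn_pstep_iterate (hx : IsAlternating c x) (hy : IsAlternating c y)
    (hflip : Function.Semiconj (c ∘ extEdge x y) (pstep c x y) not) (p : ZMod N × ZMod M) :
    Set.InjOn (fun i => (pstep c x y)^[i] p) (Set.Iio (N.lcm M)) := by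
  intro i hi j hj h
  simp only [pstep_iterate hx hy hflip, add_right_inj] at h
  rw [← addOrderOf_stepDir c x y p] at hi hj
  exact nsmul_injOn_Iio_addOrderOf hi hj h

theorem parallelClass_eq_image (c : Sym2 V → Bool) (x : ZMod N → V) (y : ZMod M → V)
    (a : ZMod N) (b : ZMod M) :
    parallelClass c x y a b =
      (fun i => extEdge x y ((pstep c x y)^[i] (a, b))) '' Set.Iio (N.lcm M) := by
  ext e
  simp only [parallelClass, extEdge, Set.mem_ofPred_eq, Set.mem_image, Set.mem_Iio, eq_comm]

theorem mem_parallelClass_self (hN : 0 < N) (hM : 0 < M) (c : Sym2 V → Bool) (x : ZMod N → V)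
    (y : ZMod M → V) (a : ZMod N) (b : ZMod M) : s(x a, y b) ∈ parallelClass c x y a b :=
  ⟨0, Nat.lcm_pos hN hM, rfl⟩

theorem ncard_parallelClass {a : ZMod N} {b : ZMod M}
    (hinj : Set.InjOn (fun i => extEdge x y ((pstep c x y)^[i] (a, b))) (Set.Iio (N.lcm M))) :
    (parallelClass c x y a b).ncard = N.lcm M := by
  rw [parallelClass_eq_image, hinj.ncard_image, Set.ncard_Iio_nat]

theorem ncard_parallelClass_color {a : ZMod N} {b : ZMod M}
    (hinj : Set.InjOn (fun i => extEdge x y ((pstep c x y)^[i] (a, b))) (Set.Iio (N.lcm M)))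
    (hflip : Function.Semiconj (c ∘ extEdge x y) (pstep c x y) not) (k : Bool) :
    {e ∈ parallelClass c x y a b | c e = k}.ncard =
      Nat.count (fun i => not^[i] (c s(x a, y b)) = k) (N.lcm M) := by
  have hcolor (i : ℕ) :
      c (extEdge x y ((pstep c x y)^[i] (a, b))) = not^[i] (c s(x a, y b)) :=
    hflip.iterate_right i (a, b)
  have himage : {e ∈ parallelClass c x y a b | c e = k} =
      (fun i => extEdge x y ((pstep c x y)^[i] (a, b))) ''
        {i ∈ Set.Iio (N.lcm M) | not^[i] (c s(x a, y b)) = k} := by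
    simp only [parallelClass_eq_image, ← hcolor]
    exact (Set.image_inter_preimage _ _ {e | c e = k}).symm
  rw [himage, (hinj.mono (Set.sep_subset _ _)).ncard_image, Nat.count_eq_card_filter_range,
    ← Set.ncard_coe_finset, Finset.coe_filter]
  simp only [Finset.mem_range, Set.mem_Iio]

end ParallelClass

theorem parallel_class_card_general {V : Type*} (G : SimpleGraph V) (c : Sym2 V → Bool)
    {n m : ℕ} (hn : 0 < n) (hm : 0 < m)
    (x : ZMod (2 * n) → V) (y : ZMod (2 * m) → V)
    (hx : IsAltCycle G c x) (hy : IsAltCycle G c y)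
    (hdisj : Disjoint (Set.range x) (Set.range y)) (hadj : ∀ i j, G.Adj (x i) (y j))
    (hgp : ¬ HasGoodPair G c x y) (a : ZMod (2 * n)) (b : ZMod (2 * m)) :
    s(x a, y b) ∈ parallelClass c x y a b ∧
    (parallelClass c x y a b).ncard = Nat.lcm (2 * n) (2 * m) ∧
    Nat.lcm (2 * n) (2 * m) = 2 * Nat.lcm n m ∧
    {e ∈ parallelClass c x y a b | c e = true}.ncard = Nat.lcm n m ∧
    {e ∈ parallelClass c x y a b | c e = false}.ncard = Nat.lcm n m := by
  obtain ⟨hxinj, -, hxalt⟩ := hx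
  obtain ⟨hyinj, -, hyalt⟩ := hy
  have hlcm : Nat.lcm (2 * n) (2 * m) = 2 * Nat.lcm n m := Nat.lcm_mul_left ..
  have hflip : Function.Semiconj (c ∘ extEdge x y) (pstep c x y) not :=
    semiconj_not_of_not_hasGoodPair hxalt hyalt hadj hgp
  have hinj := (extEdge_injective hxinj hyinj hdisj).comp_injOn
    (injOn_pstep_iterate hxalt hyalt hflip (a, b))
  have hcolor (k : Bool) : {e ∈ parallelClass c x y a b | c e = k}.ncard = Nat.lcm n m := by
    rw [ncard_parallelClass_color hinj hflip, hlcm, count_not_iterate_eq]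
  exact ⟨mem_parallelClass_self (by positivity) (by positivity) c x y a b,
    ncard_parallelClass hinj, hlcm, hcolor true, hcolor false⟩

/-- If `G ∈ C₁ ⊕ C₂` with `C₁, C₂` vertex-disjoint alternating cycles of
lengths `2n` and `2m`, and `G` has no good pair, then for every exterior edge
`u v = x a - y b`: (i) `uv ∈ P_{uv}`; (ii) `|P_{uv}| = lcm (2n) (2m) = 2 * lcm n m`;
(iii) `P_{uv}` has exactly `lcm n m` red edges and exactly `lcm n m` blue edges. -/
theorem parallel_class_card {V : Type*} (G : SimpleGraph V) (c : Sym2 V → Bool)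
    {n m : ℕ} (hn : 0 < n) (hm : 0 < m)
    (x : ZMod (2 * n) → V) (y : ZMod (2 * m) → V)
    (hG : IsCGSTwoCycles G c x y) (hgp : ¬ HasGoodPair G c x y)
    (a : ZMod (2 * n)) (b : ZMod (2 * m)) :
    s(x a, y b) ∈ parallelClass c x y a b ∧
    (parallelClass c x y a b).ncard = Nat.lcm (2 * n) (2 * m) ∧
    Nat.lcm (2 * n) (2 * m) = 2 * Nat.lcm n m ∧
    {e ∈ parallelClass c x y a b | c e = true}.ncard = Nat.lcm n m ∧
    {e ∈ parallelClass c x y a b | c e = false}.ncard = Nat.lcm n m :=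
  have ⟨hx, hy, hdisj, _, _, _, hadj⟩ := hG
  parallel_class_card_general G c hn hm x y hx hy hdisj hadj hgp a b
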